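/- Let n ∈ ℕ with n ≥ 1 and x ∈ ℝ. Define F : ℝ → ℂ by F(α) = −(2·Γ(1+α)/(ix+1)^(1+α)) · ∑_{k=0}^{n−1} C(n,k+1)·C(−1−α,k)·(2/(ix+1))^k (the closed-form fractional Laplacian of λ_n as a function of the order α). Then F(α) tends to λ_n(x) − 1 as α → 0 from the right (limit along (0,∞)). -/

import Mathlib

open MeasureTheory Finset

/-- The constant `c_α = α·2^(α−1)·Γ(1/2+α/2)/(√π·Γ(1−α/2))`. -/
noncomputable def cFrac (α : ℝ) : ℝ :=
  α * 2 ^ (α - 1) * Real.Gamma (1 / 2 + α / 2) / (Real.sqrt Real.pi * Real.Gamma (1 - α / 2))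

/-- The complex Higgins function `λ_n(x) = ((ix−1)/(ix+1))^n`. -/
noncomputable def higgins (n : ℤ) (x : ℝ) : ℂ :=
  ((Complex.I * (x : ℂ) - 1) / (Complex.I * (x : ℂ) + 1)) ^ n

/-- The derivative `λ_n'`. -/
noncomputable def higgins' (n : ℤ) (x : ℝ) : ℂ := deriv (higgins n) x

/-- The complex Christov function `μ_n(x) = (ix−1)^n/(ix+1)^(n+1)`. -/
noncomputable def christov (n : ℤ) (x : ℝ) : ℂ :=
  (Complex.I * (x : ℂ) - 1) ^ n / (Complex.I * (x : ℂ) + 1) ^ (n + 1)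

/-- The derivative `μ_n'`. -/
noncomputable def christov' (n : ℤ) (x : ℝ) : ℂ := deriv (christov n) x

/-- Generalized binomial coefficient `C(z,k) = z(z−1)⋯(z−k+1)/k!` over `ℂ`. -/
noncomputable def gbinom (z : ℂ) (k : ℕ) : ℂ :=
  (∏ i ∈ Finset.range k, (z - (i : ℂ))) / (k.factorial : ℂ)

/-- Generalized binomial coefficient `C(z,k) = z(z−1)⋯(z−k+1)/k!` over `ℝ`. -/
noncomputable def gbinomR (z : ℝ) (k : ℕ) : ℝ :=
  (∏ i ∈ Finset.range k, (z - (i : ℝ))) / (k.factorial : ℝ)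

/-- Rising factorial (Pochhammer symbol) `(z)_k = z(z+1)⋯(z+k−1)` over `ℂ`. -/
noncomputable def poch (z : ℂ) (k : ℕ) : ℂ := ∏ i ∈ Finset.range k, (z + (i : ℂ))

/-- `G_α(l) = (1/(l+1))·∑_{k=0}^{l} C(l+1,k+1)·C(−1−α,k)·2^k = ₂F₁(−l, 1+α; 2; 2)`, over `ℂ`. -/
noncomputable def Gc (α : ℝ) (l : ℕ) : ℂ :=
  (1 / ((l : ℂ) + 1)) * ∑ k ∈ Finset.range (l + 1),
    gbinom ((l : ℂ) + 1) (k + 1) * gbinom (-1 - (α : ℂ)) k * 2 ^ k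

/-- `G_α(l) = (1/(l+1))·∑_{k=0}^{l} C(l+1,k+1)·C(−1−α,k)·2^k = ₂F₁(−l, 1+α; 2; 2)`, over `ℝ`. -/
noncomputable def GR (α : ℝ) (l : ℕ) : ℝ :=
  (1 / ((l : ℝ) + 1)) * ∑ k ∈ Finset.range (l + 1),
    gbinomR ((l : ℝ) + 1) (k + 1) * gbinomR (-1 - α) k * 2 ^ k

/-- `H_α(l) = ∑_{k=0}^{l} C(l,k)·C(−1−α,k)·2^k = ₂F₁(−l, 1+α; 1; 2)`, over `ℂ`. -/
noncomputable def Hc (α : ℝ) (l : ℕ) : ℂ :=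
  ∑ k ∈ Finset.range (l + 1), gbinom (l : ℂ) k * gbinom (-1 - (α : ℂ)) k * 2 ^ k

/-- `H_α(l) = ∑_{k=0}^{l} C(l,k)·C(−1−α,k)·2^k = ₂F₁(−l, 1+α; 1; 2)`, over `ℝ`. -/
noncomputable def HR (α : ℝ) (l : ℕ) : ℝ :=
  ∑ k ∈ Finset.range (l + 1), gbinomR (l : ℝ) k * gbinomR (-1 - α) k * 2 ^ k

/-- `arccot(x) = π/2 − arctan(x) ∈ (0,π)`. -/
noncomputable def arccot (x : ℝ) : ℝ := Real.pi / 2 - Real.arctan x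

/-!
The closed form is continuous in the order wherever `Γ(1 + s)` has no pole, so its limit at `0` is
its value there. At order `0` the coefficient `C(-1, k)` is `(-1)^k`, and with `w = iz + 1` the sum
is the binomial expansion of `(1 - 2/w)^n` without its constant term, where
`1 - 2/w = (iz - 1)/(iz + 1)`.
-/

theorem add_one_pow_eq_mul_sum_choose_add_one {R : Type*} [Semiring R] (x : R) (n : ℕ) :
    (x + 1) ^ n = x * ∑ k ∈ range n, (n.choose (k + 1) : R) * x ^ k + 1 := by
  rw [(Commute.one_right x).add_pow, sum_range_succ']
  simp only [one_pow, mul_one, pow_zero, Nat.choose_zero_right, Nat.cast_one, mul_sum]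
  congr 1
  refine sum_congr rfl fun k _ => ?_
  rw [pow_succ', mul_assoc, (Nat.cast_commute _ (x ^ k)).eq]

theorem I_mul_ofReal_add_one_ne_zero (x : ℝ) : Complex.I * x + 1 ≠ 0 := fun h => by
  simpa using congrArg Complex.re h

theorem gbinom_eq_choose (z : ℂ) (k : ℕ) : gbinom z k = Ring.choose z k := by
  rw [gbinom, Ring.choose_eq_smul, ← Polynomial.aeval_eq_smeval, ← Polynomial.eval_map_algebraMap,
    descPochhammer_map, descPochhammer_eval_eq_prod_range, smul_eq_mul, div_eq_inv_mul]

theorem gbinom_natCast (n k : ℕ) : gbinom n k = n.choose k := by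
  rw [gbinom_eq_choose, Ring.choose_natCast]

theorem gbinom_neg_one (k : ℕ) : gbinom (-1) k = (-1) ^ k := by
  rw [gbinom_eq_choose, Ring.choose_neg', Ring.multichoose_one]
  simp [Int.negOnePow_def, Units.smul_def]

theorem continuous_gbinom (k : ℕ) : Continuous fun z => gbinom z k := by
  unfold gbinom
  fun_prop

/-- The closed form, for real `z` and `s`, of the fractional Laplacian of order `s` of the Higgins
function `λ_n` at the point `z`. It is extended to complex `z` and `s` with the principal branch of
the power; the points with `iz + 1 = 0` and the poles of `Γ(1 + s)` carry junk values. -/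
noncomputable def higginsFracLap (n : ℕ) (z s : ℂ) : ℂ :=
  -(2 * Complex.Gamma (1 + s) / (Complex.I * z + 1) ^ (1 + s)) *
    ∑ k ∈ range n, gbinom n (k + 1) * gbinom (-1 - s) k * (2 / (Complex.I * z + 1)) ^ k

theorem continuousAt_higginsFracLap (n : ℕ) {z s : ℂ} (hz : Complex.I * z + 1 ≠ 0)
    (hs : ∀ m : ℕ, 1 + s ≠ -m) : ContinuousAt (higginsFracLap n z) s := by
  have hGamma : ContinuousAt (fun s => Complex.Gamma (1 + s)) s :=
    (Complex.continuousAt_Gamma (1 + s) hs).comp (by fun_prop)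
  have hpow : ContinuousAt (fun s => (Complex.I * z + 1) ^ (1 + s)) s :=
    ContinuousAt.const_cpow (by fun_prop) (Or.inl hz)
  have hpow_ne : (Complex.I * z + 1) ^ (1 + s) ≠ 0 := by simp [Complex.cpow_eq_zero_iff, hz]
  have hgbinom (k : ℕ) : Continuous fun s => gbinom (-1 - s) k :=
    (continuous_gbinom k).comp (by fun_prop)
  have hsum : Continuous fun s => ∑ k ∈ range n,
      gbinom n (k + 1) * gbinom (-1 - s) k * (2 / (Complex.I * z + 1)) ^ k := by
    fun_prop
  exact ((hGamma.const_mul 2).div hpow hpow_ne).neg.mul hsum.continuousAt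

theorem higginsFracLap_zero (n : ℕ) {z : ℂ} (hz : Complex.I * z + 1 ≠ 0) :
    higginsFracLap n z 0 = ((Complex.I * z - 1) / (Complex.I * z + 1)) ^ n - 1 := by
  set w := Complex.I * z + 1 with hw
  have hbase : (Complex.I * z - 1) / w = -(2 / w) + 1 := by
    field_simp
    rw [hw]
    ring
  calc higginsFracLap n z 0
      = -(2 / w) * ∑ k ∈ range n, (n.choose (k + 1) : ℂ) * (-(2 / w)) ^ k := by
        simp only [higginsFracLap, ← hw, add_zero, sub_zero, Complex.Gamma_one, mul_one,
          Complex.cpow_one, gbinom_natCast, gbinom_neg_one, mul_assoc, neg_pow (2 / w)]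
    _ = ((Complex.I * z - 1) / w) ^ n - 1 := by
        rw [hbase, add_one_pow_eq_mul_sum_choose_add_one, add_sub_cancel_right]

theorem fracLap_higgins_limit_alpha_zero_general (n : ℕ) {z : ℂ} (hz : Complex.I * z + 1 ≠ 0) :
    Filter.Tendsto (higginsFracLap n z) (nhds 0)
      (nhds (((Complex.I * z - 1) / (Complex.I * z + 1)) ^ n - 1)) := by
  have no_pole (m : ℕ) : (1 + 0 : ℂ) ≠ -m := by
    norm_cast
    simp
  rw [← higginsFracLap_zero n hz]
  exact (continuousAt_higginsFracLap n hz no_pole).tendsto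

theorem fracLap_higgins_limit_alpha_zero (n : ℕ) (hn : 1 ≤ n) (x : ℝ) :
    Filter.Tendsto
      (fun α : ℝ =>
        -(2 * (Real.Gamma (1 + α) : ℂ) /
              (Complex.I * (x : ℂ) + 1) ^ ((1 : ℂ) + (α : ℂ))) *
          ∑ k ∈ Finset.range n,
            gbinom (n : ℂ) (k + 1) * gbinom (-1 - (α : ℂ)) k *
              (2 / (Complex.I * (x : ℂ) + 1)) ^ k)
      (nhdsWithin 0 (Set.Ioi 0)) (nhds (higgins (n : ℤ) x - 1)) := by
  simpa [Function.comp_def, higginsFracLap, higgins, ← Complex.Gamma_ofReal] using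
    (fracLap_higgins_limit_alpha_zero_general n (I_mul_ofReal_add_one_ne_zero x)).comp
      (Complex.continuous_ofReal.tendsto' 0 0 Complex.ofReal_zero |>.mono_left nhdsWithin_le_nhds)
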